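/- First reduction step with computed z is exact (Fmac_arg_reduct_correct3): Assume p > 3, x is a p-bit FPN, R is a positive normal p-bit FPN, C₁ is a round-to-nearest of 1/R to p − 2 bits, C₁ is not exactly a power of 2 (C₁ ≠ 2^j for every integer j), C₁ ≥ 2^(p+max(−1,N))·λ, 2^(−N) is a p-bit FPN, |x·R| ≤ 2^(p−N−2) − 2^(−N), z₀ is a round-to-nearest of 3·2^(p−N−2) + x·R to p bits, and z is a round-to-nearest of z₀ − 3·2^(p−N−2) to p bits. Then x − z·C₁ is a p-bit FPN. -/

import Mathlib

noncomputable section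

/-- `x` is a `k`-bit (binary) floating-point number with minimal exponent `emin`:
there exist integers `m`, `e` with `|m| < 2^k`, `e ≥ emin` and `x = m·2^e`. -/
def IsFPN (emin k : ℤ) (x : ℝ) : Prop :=
  ∃ m e : ℤ, |(m : ℝ)| < (2 : ℝ) ^ k ∧ emin ≤ e ∧ x = (m : ℝ) * (2 : ℝ) ^ e

/-- `x` is a normal `p`-bit floating-point number: it admits a representation
with `2^(p-1) ≤ |m| < 2^p`. -/
def IsNormalFPN (emin p : ℤ) (x : ℝ) : Prop :=
  ∃ m e : ℤ, (2 : ℝ) ^ (p - 1) ≤ |(m : ℝ)| ∧ |(m : ℝ)| < (2 : ℝ) ^ p ∧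
    emin ≤ e ∧ x = (m : ℝ) * (2 : ℝ) ^ e

/-- `r` is a round-to-nearest of `a` to `k` bits (ties broken in any way). -/
def RN (emin k : ℤ) (a r : ℝ) : Prop :=
  IsFPN emin k r ∧ ∀ y : ℝ, IsFPN emin k y → |a - r| ≤ |a - y|

/-- Unit in the last place at precision `p`: `ulp(x) = 2^(⌊log₂|x|⌋ - p + 1)`. -/
def ulp (p : ℤ) (x : ℝ) : ℝ := (2 : ℝ) ^ (Int.log 2 |x| - p + 1)

theorem IsFPN.of_abs_lt {emin k f m : ℤ} {y : ℝ} (hf : emin ≤ f)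
    (hy : y = (m : ℝ) * (2 : ℝ) ^ f) (hlt : |y| < (2 : ℝ) ^ k * (2 : ℝ) ^ f) :
    IsFPN emin k y := by
  have h2 : (0 : ℝ) < (2 : ℝ) ^ f := by positivity
  refine ⟨m, f, ?_, hf, hy⟩
  rw [hy, abs_mul, abs_of_pos h2] at hlt
  exact lt_of_mul_lt_mul_right hlt h2.le

theorem isFPN_zpow {emin k f : ℤ} (hk : 1 ≤ k) (hf : emin ≤ f) :
    IsFPN emin k ((2 : ℝ) ^ k * (2 : ℝ) ^ f) := by
  obtain ⟨n, rfl⟩ : ∃ n : ℕ, k = n + 1 := ⟨(k - 1).toNat, by omega⟩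
  refine ⟨2 ^ n, f + 1, ?_, by omega, ?_⟩
  · push_cast
    rw [abs_of_pos (by positivity), zpow_add₀ two_ne_zero, zpow_natCast]
    have : (0 : ℝ) < 2 ^ n := by positivity
    norm_num
  · push_cast
    rw [zpow_add₀ two_ne_zero, zpow_add₀ two_ne_zero, zpow_natCast]
    ring

theorem IsFPN.of_pos_le {emin k f m : ℤ} {y : ℝ} (hk : 1 ≤ k) (hf : emin ≤ f)
    (hy : y = (m : ℝ) * (2 : ℝ) ^ f) (h0 : 0 ≤ y) (hle : y ≤ (2 : ℝ) ^ k * (2 : ℝ) ^ f) :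
    IsFPN emin k y := by
  rcases hle.lt_or_eq with h | h
  · exact .of_abs_lt hf hy (by rwa [abs_of_nonneg h0])
  · exact h ▸ isFPN_zpow hk hf

/-- A `k`-bit number of magnitude at least `2^(k-1)·2^f` is a multiple of `2^f`. -/
theorem IsFPN.exists_eq_mul {emin k f : ℤ} {x : ℝ} (hx : IsFPN emin k x)
    (hle : (2 : ℝ) ^ (k - 1) * (2 : ℝ) ^ f ≤ |x|) :
    ∃ m : ℤ, x = (m : ℝ) * (2 : ℝ) ^ f := by
  obtain ⟨m, e, hm, -, rfl⟩ := hx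
  have he : (0 : ℝ) < (2 : ℝ) ^ e := by positivity
  rw [abs_mul, abs_of_pos he, ← zpow_add₀ two_ne_zero] at hle
  have hlt : (2 : ℝ) ^ (k - 1 + f) < (2 : ℝ) ^ (k + e) := by
    rw [zpow_add₀ two_ne_zero k e]
    exact hle.trans_lt (mul_lt_mul_of_pos_right hm he)
  have hfe : k - 1 + f < k + e := (zpow_lt_zpow_iff_right₀ one_lt_two).1 hlt
  obtain ⟨n, rfl⟩ : ∃ n : ℕ, e = f + n := ⟨(e - f).toNat, by omega⟩
  refine ⟨m * 2 ^ n, ?_⟩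
  push_cast
  rw [zpow_add₀ two_ne_zero, zpow_natCast]
  ring

theorem RN.abs_sub_le_half {emin k : ℤ} {a r d : ℝ} (hr : RN emin k a r)
    (hadd : IsFPN emin k (r + d)) (hsub : IsFPN emin k (r - d)) (hd : 0 < d) :
    |a - r| ≤ d / 2 := by
  have h1 := hr.2 _ hadd
  have h2 := hr.2 _ hsub
  rw [← sq_le_sq] at h1 h2
  rw [abs_le]
  constructor <;> nlinarith

theorem RN.eq_of_isFPN {emin k : ℤ} {a r : ℝ} (hr : RN emin k a r) (ha : IsFPN emin k a) :
    r = a := by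
  have h := hr.2 a ha
  rw [sub_self, abs_zero] at h
  linarith [abs_nonpos_iff.1 h]

/-- Exactness of `x - ℓ·c·2^g` when `x` is close to `ℓ·t` and `t` is close to `c·2^g`,
where `c` has `p - 2` bits and is not a power of two. -/
theorem IsFPN.sub_mul_of_close {emin p g ℓ c : ℤ} {x t M : ℝ} (hx : IsFPN emin p x)
    (hM : M = (2 : ℝ) ^ (p - 3)) (hg : emin + 3 ≤ g)
    (hℓ : |(ℓ : ℝ)| ≤ 2 * M - 1) (hcM : M + 1 ≤ c) (hc2M : (c : ℝ) ≤ 2 * M - 1)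
    (ht : |t - c * (2 : ℝ) ^ g| ≤ (2 : ℝ) ^ g / 2) (hxt : |x - ℓ * t| ≤ t / 2) :
    IsFPN emin p (x - ℓ * (c * (2 : ℝ) ^ g)) := by
  have hM0 : 0 < M := by rw [hM]; positivity
  have hp : (2 : ℝ) ^ p = 8 * M := by
    rw [hM, show p = p - 3 + 3 by ring, zpow_add₀ two_ne_zero]; norm_num; ring
  have hp1 : (2 : ℝ) ^ (p - 1) = 4 * M := by
    rw [hM, show p - 1 = p - 3 + 2 by ring, zpow_add₀ two_ne_zero]; norm_num; ring
  have hg2 : (2 : ℝ) ^ g = 4 * (2 : ℝ) ^ (g - 2) := by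
    rw [zpow_sub₀ two_ne_zero]; norm_num; ring
  have hg3 : (2 : ℝ) ^ g = 8 * (2 : ℝ) ^ (g - 3) := by
    rw [zpow_sub₀ two_ne_zero]; norm_num; ring
  have hw : (0 : ℝ) < (2 : ℝ) ^ g := by positivity
  set w : ℝ := (2 : ℝ) ^ g
  have ht' := abs_le.1 ht
  have hcw : (M + 1) * w ≤ c * w := mul_le_mul_of_nonneg_right hcM hw.le
  have hcw2 : c * w ≤ (2 * M - 1) * w := mul_le_mul_of_nonneg_right hc2M hw.le
  have hMw : 0 < M * w := by positivity
  have hMg2 : M * w = 4 * (M * (2 : ℝ) ^ (g - 2)) := by rw [hg2]; ring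
  have hMg3 : M * w = 8 * (M * (2 : ℝ) ^ (g - 3)) := by rw [hg3]; ring
  by_cases hxl : M * w ≤ |x|
  · obtain ⟨m, hm⟩ := hx.exists_eq_mul (f := g - 2) (by rw [hp1]; linarith)
    refine .of_abs_lt (f := g - 2) (m := m - 4 * ℓ * c) (by omega) ?_ ?_
    · rw [hm, hg2]; push_cast; ring
    · have h1 : |(ℓ : ℝ) * (t - c * w)| ≤ (2 * M - 1) * (w / 2) := by
        rw [abs_mul]
        exact mul_le_mul hℓ ht (abs_nonneg _) ((abs_nonneg _).trans hℓ)
      have h2 : x - ℓ * (c * w) = (x - ℓ * t) + ℓ * (t - c * w) := by ring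
      rw [h2, hp]
      refine (abs_add_le _ _).trans_lt ?_
      linarith
  push Not at hxl
  have hxl' := abs_lt.1 hxl
  have hxt' := abs_le.1 hxt
  have hℓ2 : -2 < ℓ ∧ ℓ < 2 := by
    constructor
    · by_contra! h
      have : (ℓ : ℝ) * t ≤ -2 * t :=
        mul_le_mul_of_nonneg_right (by exact_mod_cast h) (by linarith)
      linarith
    · by_contra! h
      have : 2 * t ≤ (ℓ : ℝ) * t :=
        mul_le_mul_of_nonneg_right (by exact_mod_cast h) (by linarith)
      linarith
  obtain rfl | rfl | rfl : ℓ = 0 ∨ ℓ = 1 ∨ ℓ = -1 := by omega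
  · simpa using hx
  all_goals
    push_cast at hxt' ⊢
    obtain ⟨m, hm⟩ := hx.exists_eq_mul (f := g - 3) (by
      rw [hp1, le_abs]
      first
        | exact Or.inl (by linarith)
        | exact Or.inr (by linarith))
  · refine .of_abs_lt (f := g - 3) (m := m - 8 * c) (by omega) ?_ ?_
    · rw [hm, hg3]; push_cast; ring
    · rw [hp, abs_lt]; constructor <;> linarith
  · refine .of_abs_lt (f := g - 3) (m := m + 8 * c) (by omega) ?_ ?_
    · rw [hm, hg3]; push_cast; ring
    · rw [hp, abs_lt]; constructor <;> linarith

/-- A positive `k`-bit number that is large enough has a normalized representation. -/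
theorem IsFPN.exists_normalized {emin k f : ℤ} {x : ℝ} (hx : IsFPN emin k x)
    (hf : (2 : ℝ) ^ f ≤ x) :
    ∃ c e : ℤ, f - k + 1 ≤ e ∧ x = (c : ℝ) * (2 : ℝ) ^ e ∧
      (2 : ℝ) ^ (k - 1) ≤ c ∧ (c : ℝ) < (2 : ℝ) ^ k := by
  have hx0 : 0 < x := lt_of_lt_of_le (by positivity) hf
  have hlo : (2 : ℝ) ^ Int.log 2 x ≤ x := by
    simpa using Int.zpow_log_le_self (b := 2) one_lt_two hx0
  have hhi : x < (2 : ℝ) ^ (Int.log 2 x + 1) := by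
    simpa using Int.lt_zpow_succ_log_self (b := 2) one_lt_two x
  have hfl : f < Int.log 2 x + 1 :=
    (zpow_lt_zpow_iff_right₀ (one_lt_two (α := ℝ))).1 (hf.trans_lt hhi)
  have hlo' : (2 : ℝ) ^ (k - 1) * (2 : ℝ) ^ (Int.log 2 x - k + 1) ≤ x := by
    rw [← zpow_add₀ two_ne_zero]; convert hlo using 2; ring
  have hhi' : x < (2 : ℝ) ^ k * (2 : ℝ) ^ (Int.log 2 x - k + 1) := by
    rw [← zpow_add₀ two_ne_zero]; convert hhi using 2; ring
  have h2 : (0 : ℝ) < (2 : ℝ) ^ (Int.log 2 x - k + 1) := by positivity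
  obtain ⟨c, hc⟩ := hx.exists_eq_mul (hlo'.trans (le_abs_self x))
  refine ⟨c, Int.log 2 x - k + 1, by omega, hc, ?_, ?_⟩
  · exact le_of_mul_le_mul_right (hlo'.trans_eq hc) h2
  · exact lt_of_mul_lt_mul_right (hc.symm.trans_lt hhi') h2.le

/-- The magic-constant rounding of `a` yields an integer multiple of `2^(-N)`
that is nearest to `a`. -/
theorem RN.exists_eq_mul_of_magic {p emin N : ℤ} (hp : 3 < p) {a z₀ z : ℝ}
    (hN : emin ≤ -N)
    (ha : |a| ≤ (2 : ℝ) ^ (p - N - 2) - (2 : ℝ) ^ (-N))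
    (hz₀ : RN emin p (3 * (2 : ℝ) ^ (p - N - 2) + a) z₀)
    (hz : RN emin p (z₀ - 3 * (2 : ℝ) ^ (p - N - 2)) z) :
    ∃ ℓ : ℤ, z = ℓ * (2 : ℝ) ^ (-N) ∧ |(ℓ : ℝ)| ≤ (2 : ℝ) ^ (p - 2) - 1 ∧
      |a - z| ≤ (2 : ℝ) ^ (-N) / 2 := by
  obtain ⟨n, rfl⟩ : ∃ n : ℕ, p = n + 2 := ⟨(p - 2).toNat, by omega⟩
  have hB : (2 : ℝ) ^ ((n : ℤ) + 2 - N - 2) = 2 ^ n * (2 : ℝ) ^ (-N) := by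
    rw [show (n : ℤ) + 2 - N - 2 = n + -N by ring, zpow_add₀ two_ne_zero, zpow_natCast]
  have hp : (2 : ℝ) ^ ((n : ℤ) + 2) = 4 * 2 ^ n := by
    rw [zpow_add₀ two_ne_zero, zpow_natCast]; norm_num; ring
  have hp1 : (2 : ℝ) ^ ((n : ℤ) + 2 - 1) = 2 * 2 ^ n := by
    rw [show (n : ℤ) + 2 - 1 = n + 1 by ring, zpow_add₀ two_ne_zero, zpow_natCast]; norm_num; ring
  have hp2 : (2 : ℝ) ^ ((n : ℤ) + 2 - 2) = 2 ^ n := by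
    rw [show (n : ℤ) + 2 - 2 = n by ring, zpow_natCast]
  have hK1 : (1 : ℝ) ≤ 2 ^ n := one_le_pow₀ one_le_two
  rw [hB] at ha hz₀ hz
  rw [hp2]
  have hu : (0 : ℝ) < (2 : ℝ) ^ (-N) := by positivity
  set u : ℝ := (2 : ℝ) ^ (-N)
  have hKu : u ≤ 2 ^ n * u := le_mul_of_one_le_left hu.le hK1
  have ha' := abs_le.1 ha
  have multiple_isFPN : ∀ (m : ℤ) (y : ℝ), y = m * u → 0 ≤ y → y ≤ 4 * (2 ^ n * u) →
      IsFPN emin (n + 2) y := fun m y hy h0 hle ↦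
    .of_pos_le (by omega) hN hy h0 (by rw [hp]; linarith)
  have hlo := hz₀.2 (2 * (2 ^ n * u) + u)
    (multiple_isFPN (2 * 2 ^ n + 1) _ (by push_cast; ring) (by linarith) (by linarith))
  have hhi := hz₀.2 (4 * (2 ^ n * u) - u)
    (multiple_isFPN (4 * 2 ^ n - 1) _ (by push_cast; ring) (by linarith) (by linarith))
  rw [abs_of_nonneg (by linarith : (0 : ℝ) ≤ 3 * (2 ^ n * u) + a - (2 * (2 ^ n * u) + u)),
    abs_le] at hlo
  rw [abs_of_nonpos (by linarith : 3 * (2 ^ n * u) + a - (4 * (2 ^ n * u) - u) ≤ (0 : ℝ)),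
    abs_le] at hhi
  obtain ⟨k, hk⟩ := hz₀.1.exists_eq_mul (f := -N) (by
    rw [hp1, le_abs]; left; linarith)
  have herr := hz₀.abs_sub_le_half (d := u)
    (multiple_isFPN (k + 1) _ (by rw [hk]; push_cast; ring) (by linarith) (by linarith))
    (multiple_isFPN (k - 1) _ (by rw [hk]; push_cast; ring) (by linarith) (by linarith)) hu
  have hz₀m : z₀ - 3 * (2 ^ n * u) = ((k - 3 * 2 ^ n : ℤ) : ℝ) * u := by
    rw [hk]; push_cast; ring
  have hbound : |z₀ - 3 * (2 ^ n * u)| ≤ (2 ^ n - 1) * u := by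
    rw [abs_le]; constructor <;> linarith
  have hzeq := hz.eq_of_isFPN (.of_abs_lt hN hz₀m (by rw [hp]; linarith))
  refine ⟨k - 3 * 2 ^ n, hzeq.trans hz₀m, ?_, ?_⟩
  · rw [hz₀m, abs_mul, abs_of_pos hu] at hbound
    exact le_of_mul_le_mul_right hbound hu
  · rw [hzeq]
    convert herr using 2
    ring

/-- First reduction step with computed `z` is exact (Fmac_arg_reduct_correct3). -/
theorem Fmac_arg_reduct_correct3 (p emin N : ℤ) (hp : 3 < p)
    (x R C₁ z₀ z : ℝ)
    (hx : IsFPN emin p x)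
    (hRpos : 0 < R) (hRnorm : IsNormalFPN emin p R)
    (hC₁ : RN emin (p - 2) (1 / R) C₁)
    (hC₁pow : ∀ j : ℤ, C₁ ≠ (2 : ℝ) ^ j)
    (hC₁big : (2 : ℝ) ^ (p + max (-1) N) * (2 : ℝ) ^ emin ≤ C₁)
    (hN : IsFPN emin p ((2 : ℝ) ^ (-N)))
    (hxR : |x * R| ≤ (2 : ℝ) ^ (p - N - 2) - (2 : ℝ) ^ (-N))
    (hz₀ : RN emin p (3 * (2 : ℝ) ^ (p - N - 2) + x * R) z₀)
    (hz : RN emin p (z₀ - 3 * (2 : ℝ) ^ (p - N - 2)) z) :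
    IsFPN emin p (x - z * C₁) := by
  have hNe : emin ≤ -N := by
    obtain ⟨m, e, -, he, hme⟩ := hN
    have h2 : (0 : ℝ) < (2 : ℝ) ^ e := by positivity
    have hm : 0 < (m : ℝ) := pos_of_mul_pos_left (hme ▸ by positivity) h2.le
    have hm1 : (1 : ℝ) ≤ m := by exact_mod_cast Int.cast_pos.1 hm
    have : (2 : ℝ) ^ e ≤ (2 : ℝ) ^ (-N) := hme ▸ le_mul_of_one_le_left h2.le hm1
    exact he.trans ((zpow_le_zpow_iff_right₀ one_lt_two).1 this)
  obtain ⟨ℓ, hzℓ, hℓ, herr⟩ := RN.exists_eq_mul_of_magic hp hNe hxR hz₀ hz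
  rw [← zpow_add₀ two_ne_zero] at hC₁big
  obtain ⟨c, e, he, hCe, hc1, hc2⟩ := hC₁.1.exists_normalized hC₁big
  obtain ⟨n, rfl⟩ : ∃ n : ℕ, p = n + 3 := ⟨(p - 3).toNat, by omega⟩
  have hM1 : (2 : ℝ) ^ ((n : ℤ) + 3 - 2 - 1) = 2 ^ n := by
    rw [show (n : ℤ) + 3 - 2 - 1 = n by ring, zpow_natCast]
  have hM2 : (2 : ℝ) ^ ((n : ℤ) + 3 - 2) = 2 * 2 ^ n := by
    rw [show (n : ℤ) + 3 - 2 = n + 1 by ring, zpow_add₀ two_ne_zero, zpow_natCast]; norm_num; ring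
  rw [hM1] at hc1
  rw [hM2] at hc2 hℓ
  have hcne : c ≠ 2 ^ n := by
    rintro rfl
    refine hC₁pow (n + e) (hCe.trans ?_)
    rw [zpow_add₀ two_ne_zero, zpow_natCast]; push_cast; rfl
  have hc1' : 2 ^ n ≤ c := by exact_mod_cast hc1
  have hc2' : c < 2 * 2 ^ n := by exact_mod_cast hc2
  have hclo : (2 : ℝ) ^ n + 1 ≤ c := by
    exact_mod_cast (show 2 ^ n + 1 ≤ c by omega)
  have hchi : (c : ℝ) ≤ 2 * 2 ^ n - 1 := by
    have : (c : ℝ) + 1 ≤ 2 * 2 ^ n := by exact_mod_cast (show c + 1 ≤ 2 * 2 ^ n by omega)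
    linarith
  have hE : (0 : ℝ) < (2 : ℝ) ^ e := by positivity
  have hu : (0 : ℝ) < (2 : ℝ) ^ (-N) := by positivity
  have hn0 : (0 : ℝ) < 2 ^ n := by positivity
  have hmax1 := le_max_left (-1) N
  have hmax2 := le_max_right (-1) N
  have multiple_isFPN : ∀ m : ℤ, 0 ≤ (m : ℝ) → (m : ℝ) ≤ 2 * 2 ^ n →
      IsFPN emin (n + 3 - 2) (m * (2 : ℝ) ^ e) := fun m h0 hle ↦
    .of_pos_le (by omega) (by omega) rfl (by positivity)
      (by rw [hM2]; exact mul_le_mul_of_nonneg_right hle hE.le)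
  have hCerr := hC₁.abs_sub_le_half (d := (2 : ℝ) ^ e)
    (by convert multiple_isFPN (c + 1) (by push_cast; linarith) (by push_cast; linarith) using 1
        rw [hCe]; push_cast; ring)
    (by convert multiple_isFPN (c - 1) (by push_cast; linarith) (by push_cast; linarith) using 1
        rw [hCe]; push_cast; ring) hE
  have hg : (2 : ℝ) ^ (e - N) = (2 : ℝ) ^ e * (2 : ℝ) ^ (-N) := by
    rw [← zpow_add₀ two_ne_zero]; rfl
  have key := hx.sub_mul_of_close (g := e - N) (ℓ := ℓ) (c := c) (t := 1 / R * (2 : ℝ) ^ (-N))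
    (M := 2 ^ n) (by simp) (by omega) hℓ hclo hchi ?_ ?_
  · convert key using 2
    rw [hzℓ, hCe, hg]; ring
  · rw [hg, show 1 / R * (2 : ℝ) ^ (-N) - c * ((2 : ℝ) ^ e * (2 : ℝ) ^ (-N))
      = (1 / R - C₁) * (2 : ℝ) ^ (-N) by rw [hCe]; ring, abs_mul, abs_of_pos hu]
    linarith [mul_le_mul_of_nonneg_right hCerr hu.le]
  · have hR : 0 < 1 / R := by positivity
    have : x - ℓ * (1 / R * (2 : ℝ) ^ (-N)) = 1 / R * (x * R - z) := by
      rw [hzℓ]; field_simp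
    rw [this, abs_mul, abs_of_pos hR]
    linarith [mul_le_mul_of_nonneg_left herr hR.le]
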